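/- arXiv:cs/0510029 — 3 statements merged into one kernel-verified Lean document; each statement's English description precedes it below -/
import Mathlib

section
/- Every nonsingular n×n joint probability matrix all of whose entries are strictly positive is a good matrix. -/
open scoped BigOperators Classical

noncomputable section

/-- Probability of an event `E` under a distribution `μ` on a finite sample space `Ω`. -/
def pr {Ω : Type} [Fintype Ω] (μ : Ω → ℝ) (E : Ω → Prop) : ℝ :=
  ∑ ω, if E ω then μ ω else 0

/-- `μ` is a probability distribution on the finite space `Ω`. -/
def IsProb {Ω : Type} [Fintype Ω] (μ : Ω → ℝ) : Prop :=
  (∀ ω, 0 ≤ μ ω) ∧ ∑ ω, μ ω = 1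

/-- Shannon entropy (base 2) of a random variable `α` on a finite probability space. -/
def ent {Ω A : Type} [Fintype Ω] (μ : Ω → ℝ) (α : Ω → A) : ℝ :=
  -∑ a ∈ Finset.univ.image α,
      pr μ (fun ω => α ω = a) * Real.logb 2 (pr μ (fun ω => α ω = a))

/-- Conditional entropy `H(α | β)`. -/
def condEnt {Ω A B : Type} [Fintype Ω] (μ : Ω → ℝ) (α : Ω → A) (β : Ω → B) : ℝ :=
  ent μ (fun ω => (α ω, β ω)) - ent μ β

/-- Mutual information `I(α : β)`. -/
def mutualInfo {Ω A B : Type} [Fintype Ω] (μ : Ω → ℝ) (α : Ω → A) (β : Ω → B) : ℝ :=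
  ent μ α + ent μ β - ent μ (fun ω => (α ω, β ω))

/-- Conditional mutual information `I(α : β | γ)`. -/
def condMutualInfo {Ω A B C : Type} [Fintype Ω] (μ : Ω → ℝ)
    (α : Ω → A) (β : Ω → B) (γ : Ω → C) : ℝ :=
  condEnt μ α γ + condEnt μ β γ - condEnt μ (fun ω => (α ω, β ω)) γ

/-- Independence of two random variables. -/
def Indep {Ω A B : Type} [Fintype Ω] (μ : Ω → ℝ) (α : Ω → A) (β : Ω → B) : Prop :=
  ∀ (a : A) (b : B),
    pr μ (fun ω => α ω = a ∧ β ω = b) =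
      pr μ (fun ω => α ω = a) * pr μ (fun ω => β ω = b)

/-- Auxiliary form of "conditionally independent of order `k`" (explicit `Fintype`):
`α` and `β` are conditionally independent of order `0` if they are independent,
and of order `k + 1` if on some finite probability space there are random variables
`α₀, β₀, α*, β*` such that `(α₀, β₀)` has the same joint distribution as `(α, β)`,
`I(α₀ : β₀ | α*) = 0`, `I(α₀ : β₀ | β*) = 0`, and `α*, β*` are conditionally
independent of order `k`. -/
def CondIndepOrderAux : ℕ → (Ω A B : Type) → Fintype Ω → (Ω → ℝ) → (Ω → A) → (Ω → B) → Prop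
  | 0, _Ω, _A, _B, iΩ, μ, α, β => @Indep _ _ _ iΩ μ α β
  | k+1, _Ω, A, B, iΩ, μ, α, β =>
      ∃ (Ω' A' B' : Type) (iΩ' : Fintype Ω') (μ' : Ω' → ℝ)
        (α₀ : Ω' → A) (β₀ : Ω' → B) (αs : Ω' → A') (βs : Ω' → B'),
        @IsProb _ iΩ' μ' ∧
        (∀ (a : A) (b : B),
          @pr _ iΩ' μ' (fun ω => α₀ ω = a ∧ β₀ ω = b) =
            @pr _ iΩ μ (fun ω => α ω = a ∧ β ω = b)) ∧
        @condMutualInfo _ _ _ _ iΩ' μ' α₀ β₀ αs = 0 ∧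
        @condMutualInfo _ _ _ _ iΩ' μ' α₀ β₀ βs = 0 ∧
        CondIndepOrderAux k Ω' A' B' iΩ' μ' αs βs

/-- Random variables `α` and `β` on a finite probability space are
conditionally independent of order `k`. -/
def CondIndepOrder {Ω A B : Type} [iΩ : Fintype Ω]
    (μ : Ω → ℝ) (α : Ω → A) (β : Ω → B) (k : ℕ) : Prop :=
  CondIndepOrderAux k Ω A B iΩ μ α β

/-- An `m × n` joint probability matrix: nonnegative entries summing to `1`. -/
def IsJointProbMatrix {m n : ℕ} (M : Matrix (Fin m) (Fin n) ℝ) : Prop :=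
  (∀ i j, 0 ≤ M i j) ∧ ∑ i, ∑ j, M i j = 1

/-- `M` is the joint probability matrix of the pair `(α, β)`. -/
def IsJointMatrixOf {Ω : Type} [Fintype Ω] {m n : ℕ} (M : Matrix (Fin m) (Fin n) ℝ)
    (μ : Ω → ℝ) (α : Ω → Fin m) (β : Ω → Fin n) : Prop :=
  ∀ i j, M i j = pr μ (fun ω => α ω = i ∧ β ω = j)

/-- `M` is a block matrix: rows and columns can be partitioned into two nonempty
parts so that the two diagonal blocks each contain a nonzero element and all
entries outside the diagonal blocks vanish. -/
def IsBlockMatrix {m n : ℕ} (M : Matrix (Fin m) (Fin n) ℝ) : Prop :=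
  ∃ (I₁ : Finset (Fin m)) (J₁ : Finset (Fin n)),
    I₁.Nonempty ∧ I₁ᶜ.Nonempty ∧ J₁.Nonempty ∧ J₁ᶜ.Nonempty ∧
    (∃ i ∈ I₁, ∃ j ∈ J₁, M i j ≠ 0) ∧
    (∃ i ∈ I₁ᶜ, ∃ j ∈ J₁ᶜ, M i j ≠ 0) ∧
    (∀ i j, ((i ∈ I₁ ∧ j ∈ J₁ᶜ) ∨ (i ∈ I₁ᶜ ∧ j ∈ J₁)) → M i j = 0)

/-- `M` is a good matrix: the joint probability matrix of some pair of
conditionally independent random variables (of some finite order). -/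
def IsGoodMatrix {m n : ℕ} (M : Matrix (Fin m) (Fin n) ℝ) : Prop :=
  ∃ (Ω : Type) (iΩ : Fintype Ω) (μ : Ω → ℝ) (α : Ω → Fin m) (β : Ω → Fin n) (k : ℕ),
    @IsProb _ iΩ μ ∧ @IsJointMatrixOf _ iΩ _ _ M μ α β ∧
    @CondIndepOrder _ _ _ iΩ μ α β k

/-- A stochastic matrix: nonnegative entries, all row sums equal to `1`. -/
def IsStochastic {m n : ℕ} (A : Matrix (Fin m) (Fin n) ℝ) : Prop :=
  (∀ i j, 0 ≤ A i j) ∧ ∀ i, ∑ j, A i j = 1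

/-- The matrix `D_ε`: diagonal entries `1/2 - ε`, off-diagonal entries `ε`. -/
def Dmat (ε : ℝ) : Matrix (Fin 2) (Fin 2) ℝ :=
  fun i j => if i = j then 1/2 - ε else ε

/-- The distribution of `n` i.i.d. trials, each distributed according to `μ`. -/
def iidMeasure {Ω : Type} [Fintype Ω] (μ : Ω → ℝ) (n : ℕ) : (Fin n → Ω) → ℝ :=
  fun ωv => ∏ i, μ (ωv i)

/-- The sequence of `n` coordinatewise copies of a random variable. -/
def iidRV {Ω A : Type} (α : Ω → A) (n : ℕ) : (Fin n → Ω) → (Fin n → A) :=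
  fun ωv i => α (ωv i)

/-- `(u, v, w)` belongs to the rate region of the pair `(α, β)`. -/
def InRateRegion {Ω A B : Type} [Fintype Ω] (μ : Ω → ℝ) (α : Ω → A) (β : Ω → B)
    (u v w : ℝ) : Prop :=
  0 ≤ u ∧ 0 ≤ v ∧ 0 ≤ w ∧
  ∀ ε > (0:ℝ), ∀ δ > (0:ℝ), ∃ n₀ : ℕ, ∀ n ≥ n₀,
    ∃ (t : (Fin n → A) × (Fin n → B) → (Fin ⌊(u + δ) * n⌋₊ → Bool))
      (f : (Fin n → A) × (Fin n → B) → (Fin ⌊(v + δ) * n⌋₊ → Bool))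
      (g : (Fin n → A) × (Fin n → B) → (Fin ⌊(w + δ) * n⌋₊ → Bool))
      (r : (Fin ⌊(u + δ) * n⌋₊ → Bool) × (Fin ⌊(v + δ) * n⌋₊ → Bool) → (Fin n → A))
      (s : (Fin ⌊(u + δ) * n⌋₊ → Bool) × (Fin ⌊(w + δ) * n⌋₊ → Bool) → (Fin n → B)),
      pr (iidMeasure μ n) (fun ωv =>
          r (t (iidRV α n ωv, iidRV β n ωv), f (iidRV α n ωv, iidRV β n ωv)) = iidRV α n ωv)
        > 1 - ε ∧
      pr (iidMeasure μ n) (fun ωv =>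
          s (t (iidRV α n ωv, iidRV β n ωv), g (iidRV α n ωv, iidRV β n ωv)) = iidRV β n ωv)
        > 1 - ε

/-- The support of a matrix: the set of positions of its nonzero entries. -/
def msupport {m n : ℕ} (M : Matrix (Fin m) (Fin n) ℝ) : Set (Fin m × Fin n) :=
  {p | M p.1 p.2 ≠ 0}

/-- An r-matrix: nonnegative entries and rectangular support. -/
def IsRMatrix {m n : ℕ} (M : Matrix (Fin m) (Fin n) ℝ) : Prop :=
  (∀ i j, 0 ≤ M i j) ∧ ∃ (A : Set (Fin m)) (B : Set (Fin n)), msupport M = A ×ˢ B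

/-- An r-decomposition of `M`: an expression of `M` as a finite sum of r-matrices
such that the supports of consecutive summands intersect. -/
def IsRDecomposition {m n : ℕ} (M : Matrix (Fin m) (Fin n) ℝ)
    (l : ℕ) (Ms : Fin l → Matrix (Fin m) (Fin n) ℝ) : Prop :=
  M = ∑ i, Ms i ∧ (∀ i, IsRMatrix (Ms i)) ∧
  ∀ (i : ℕ) (h : i + 1 < l),
    (msupport (Ms ⟨i, Nat.lt_of_succ_lt h⟩) ∩ msupport (Ms ⟨i + 1, h⟩)).Nonempty

end


lemma ent_eq_sum {Ω A : Type} [Fintype Ω] (μ : Ω → ℝ) (α : Ω → A) :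
    ent μ α = -∑ ω, μ ω * Real.logb 2 (pr μ (fun ω' => α ω' = α ω)) := by
  unfold ent
  congr 1
  apply Finset.sum_image'
  intro i _
  rw [Finset.sum_congr rfl (g := fun j => μ j * Real.logb 2 (pr μ (fun ω' => α ω' = α i)))]
  · rw [← Finset.sum_mul, Finset.sum_filter]
    rfl
  · intro j hj
    rw [(Finset.mem_filter.mp hj).2]

lemma pr_pos_of_mem {Ω : Type} [Fintype Ω] {μ : Ω → ℝ} (h : ∀ ω, 0 ≤ μ ω) (E : Ω → Prop)
    {ω : Ω} (hE : E ω) (hω : 0 < μ ω) : 0 < pr μ E := by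
  unfold pr
  apply Finset.sum_pos'
  · intro i _
    split_ifs
    · exact h i
    · exact le_rfl
  · exact ⟨ω, Finset.mem_univ _, by simpa [hE] using hω⟩

lemma condMutualInfo_eq_zero {Ω A B C : Type} [Fintype Ω] {μ : Ω → ℝ}
    (h : ∀ ω, 0 ≤ μ ω) (α : Ω → A) (β : Ω → B) (γ : Ω → C)
    (hp : ∀ a b c, pr μ (fun ω => (α ω, β ω) = (a, b) ∧ γ ω = c) * pr μ (fun ω => γ ω = c) =
      pr μ (fun ω => α ω = a ∧ γ ω = c) * pr μ (fun ω => β ω = b ∧ γ ω = c)) :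
    condMutualInfo μ α β γ = 0 := by
  unfold condMutualInfo condEnt
  simp only [ent_eq_sum]
  suffices H : ∑ ω, (μ ω * Real.logb 2 (pr μ (fun ω' => (α ω', γ ω') = (α ω, γ ω)))
      + μ ω * Real.logb 2 (pr μ (fun ω' => (β ω', γ ω') = (β ω, γ ω)))
      - μ ω * Real.logb 2 (pr μ (fun ω' => ((α ω', β ω'), γ ω') = ((α ω, β ω), γ ω)))
      - μ ω * Real.logb 2 (pr μ (fun ω' => γ ω' = γ ω))) = 0 by
    simp only [Finset.sum_sub_distrib, Finset.sum_add_distrib] at H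
    linarith
  apply Finset.sum_eq_zero
  intro ω _
  rcases (h ω).eq_or_lt with h0 | h0
  · simp [← h0]
  have h1 := pr_pos_of_mem h (fun ω' => (α ω', γ ω') = (α ω, γ ω)) (ω := ω) rfl h0
  have h2 := pr_pos_of_mem h (fun ω' => (β ω', γ ω') = (β ω, γ ω)) (ω := ω) rfl h0
  have h3 := pr_pos_of_mem h
    (fun ω' => ((α ω', β ω'), γ ω') = ((α ω, β ω), γ ω)) (ω := ω) rfl h0
  have h4 := pr_pos_of_mem h (fun ω' => γ ω' = γ ω) (ω := ω) rfl h0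
  have e : pr μ (fun ω' => ((α ω', β ω'), γ ω') = ((α ω, β ω), γ ω)) *
      pr μ (fun ω' => γ ω' = γ ω) = pr μ (fun ω' => (α ω', γ ω') = (α ω, γ ω)) *
      pr μ (fun ω' => (β ω', γ ω') = (β ω, γ ω)) := by
    have := hp (α ω) (β ω) (γ ω)
    convert this using 3 <;> simp
  have e2 := congrArg (Real.logb 2) e
  rw [Real.logb_mul h3.ne' h4.ne', Real.logb_mul h1.ne' h2.ne'] at e2
  linear_combination (-μ ω) * e2

/-- Every pair with joint distribution `N` is conditionally independent of order `k`. -/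
def GoodK {n : ℕ} (k : ℕ) (N : Matrix (Fin n) (Fin n) ℝ) : Prop :=
  ∀ (Ω : Type) (iΩ : Fintype Ω) (μ : Ω → ℝ) (α β : Ω → Fin n),
    @IsJointMatrixOf _ iΩ _ _ N μ α β → @CondIndepOrder _ _ _ iΩ μ α β k

lemma goodK_zero {n : ℕ} (r : Fin n → ℝ) (hr : ∑ i, r i = 1)
    (N : Matrix (Fin n) (Fin n) ℝ) (hN : ∀ i j, N i j = r i * r j) : GoodK 0 N := by
  intro Ω iΩ μ α β hJ
  show Indep μ α β
  have hJ' : ∀ i j, N i j = pr μ (fun ω => α ω = i ∧ β ω = j) := hJ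
  have hα : ∀ i, pr μ (fun ω => α ω = i) = r i := by
    intro i
    have : pr μ (fun ω => α ω = i) = ∑ j, pr μ (fun ω => α ω = i ∧ β ω = j) := by
      unfold pr
      rw [Finset.sum_comm]
      refine Finset.sum_congr rfl fun ω _ => ?_
      by_cases h : α ω = i <;> simp [h]
    rw [this, Finset.sum_congr rfl fun j _ => ((hJ' i j).symm.trans (hN i j)),
      ← Finset.mul_sum, hr, mul_one]
  have hβ : ∀ j, pr μ (fun ω => β ω = j) = r j := by
    intro j
    have : pr μ (fun ω => β ω = j) = ∑ i, pr μ (fun ω => α ω = i ∧ β ω = j) := by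
      unfold pr
      rw [Finset.sum_comm]
      refine Finset.sum_congr rfl fun ω _ => ?_
      by_cases h : β ω = j <;> simp [h]
    rw [this, Finset.sum_congr rfl fun i _ => ((hJ' i j).symm.trans (hN i j)),
      ← Finset.sum_mul, hr, one_mul]
  intro i j
  rw [← hJ', hα, hβ, hN]

lemma goodK_step {n k : ℕ} (N M : Matrix (Fin n) (Fin n) ℝ) (hN : GoodK k N)
    (W : Fin n → Fin n → Fin n → Fin n → ℝ) (hW : ∀ a b x y, 0 ≤ W a b x y)
    (hWN : ∀ x y, ∑ a, ∑ b, W a b x y = N x y)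
    (hWM : ∀ a b, ∑ x, ∑ y, W a b x y = M a b)
    (hM : ∑ a, ∑ b, M a b = 1)
    (F G F' G' : Fin n → Fin n → ℝ)
    (h1 : ∀ a b x, ∑ y, W a b x y = F a x * G b x)
    (h2 : ∀ a b y, ∑ x, W a b x y = F' a y * G' b y) : GoodK (k+1) M := by
  intro Ω iΩ μ α β hJ
  have hJ' : ∀ i j, M i j = pr μ (fun ω => α ω = i ∧ β ω = j) := hJ
  let μ' : Fin n × Fin n × Fin n × Fin n → ℝ := fun p => W p.1 p.2.1 p.2.2.1 p.2.2.2
  have hμ' : ∀ p, 0 ≤ μ' p := fun p => hW _ _ _ _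
  refine ⟨Fin n × Fin n × Fin n × Fin n, Fin n, Fin n, inferInstance, μ',
    fun p => p.1, fun p => p.2.1, fun p => p.2.2.1, fun p => p.2.2.2, ⟨hμ', ?_⟩, ?_, ?_, ?_, ?_⟩
  · simp only [Fintype.sum_prod_type, μ', hWM, hM]
  · intro a b
    rw [← hJ', ← hWM]
    simp [pr, Fintype.sum_prod_type, μ', ite_and]
  · apply condMutualInfo_eq_zero hμ'
    intro a b c
    have e1 : pr μ' (fun ω => (ω.1, ω.2.1) = (a, b) ∧ ω.2.2.1 = c) = F a c * G b c := by
      rw [← h1]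
      simp [pr, Fintype.sum_prod_type, μ', ite_and]
    have e2 : pr μ' (fun ω => ω.2.2.1 = c) = (∑ a, F a c) * ∑ b, G b c := by
      rw [Finset.sum_mul_sum]
      simp [pr, Fintype.sum_prod_type, μ', ← h1]
    have e3 : pr μ' (fun ω => ω.1 = a ∧ ω.2.2.1 = c) = F a c * ∑ b, G b c := by
      rw [Finset.mul_sum]
      simp [pr, Fintype.sum_prod_type, μ', ← h1, ite_and]
    have e4 : pr μ' (fun ω => ω.2.1 = b ∧ ω.2.2.1 = c) = (∑ a, F a c) * G b c := by
      rw [Finset.sum_mul]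
      simp [pr, Fintype.sum_prod_type, μ', ← h1, ite_and]
    rw [e1, e2, e3, e4]; ring
  · apply condMutualInfo_eq_zero hμ'
    intro a b c
    have e1 : pr μ' (fun ω => (ω.1, ω.2.1) = (a, b) ∧ ω.2.2.2 = c) = F' a c * G' b c := by
      rw [← h2]
      simp [pr, Fintype.sum_prod_type, μ', ite_and]
    have e2 : pr μ' (fun ω => ω.2.2.2 = c) = (∑ a, F' a c) * ∑ b, G' b c := by
      rw [Finset.sum_mul_sum]
      simp [pr, Fintype.sum_prod_type, μ', ← h2]
    have e3 : pr μ' (fun ω => ω.1 = a ∧ ω.2.2.2 = c) = F' a c * ∑ b, G' b c := by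
      rw [Finset.mul_sum]
      simp [pr, Fintype.sum_prod_type, μ', ← h2, ite_and]
    have e4 : pr μ' (fun ω => ω.2.1 = b ∧ ω.2.2.2 = c) = (∑ a, F' a c) * G' b c := by
      rw [Finset.sum_mul]
      simp [pr, Fintype.sum_prod_type, μ', ← h2, ite_and]
    rw [e1, e2, e3, e4]; ring
  · apply hN
    intro x y
    rw [← hWN]
    simp [pr, Fintype.sum_prod_type, μ', ite_and]

/-- Kronecker delta. -/
noncomputable def dl {n : ℕ} (i j : Fin n) : ℝ := if i = j then 1 else 0

/-- `(1-t) diag(r) + t r rᵀ`. -/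
noncomputable def Nmat {n : ℕ} (r : Fin n → ℝ) (t : ℝ) : Matrix (Fin n) (Fin n) ℝ :=
  fun x y => (1 - t) * r x * dl x y + t * (r x * r y)

lemma dl_nonneg {n : ℕ} (i j : Fin n) : 0 ≤ dl i j := by
  unfold dl; split_ifs <;> norm_num

lemma dl_comm {n : ℕ} (i j : Fin n) : dl i j = dl j i := by
  simp [dl, eq_comm]

lemma sum_dl_mul {n : ℕ} (i : Fin n) (f : Fin n → ℝ) : ∑ j, dl i j * f j = f i := by
  simp [dl]

lemma sum_dl_mul' {n : ℕ} (i : Fin n) (f : Fin n → ℝ) : ∑ j, dl j i * f j = f i := by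
  simp [dl]

lemma sum_dl {n : ℕ} (i : Fin n) : ∑ j, dl i j = 1 := by
  simp [dl]

lemma sum_dl' {n : ℕ} (i : Fin n) : ∑ j, dl j i = 1 := by
  simp [dl]

lemma Nmat_sum {n : ℕ} (r : Fin n → ℝ) (hr : ∑ i, r i = 1) (t : ℝ) :
    ∑ x, ∑ y, Nmat r t x y = 1 := by
  simp only [Nmat, Finset.sum_add_distrib, ← Finset.mul_sum, sum_dl, mul_one, hr]
  ring

/-- The weights of the improvement step. -/
noncomputable def Wt {n : ℕ} (r : Fin n → ℝ) (τ c : ℝ) (a b x y : Fin n) : ℝ :=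
  (1 - (2 * τ - τ ^ 2 + c)) * r x * dl x y * (dl x a * dl x b)
  + r x * r y * (c * (dl x a * dl x b + dl y a * dl y b)
      + τ * (1 - τ) * (dl x a * dl y b + dl y a * dl x b)
      + (τ ^ 2 * (r a * r b) - c * r a * dl a b))

lemma Wt_symm {n : ℕ} (r : Fin n → ℝ) (τ c : ℝ) (a b x y : Fin n) :
    Wt r τ c a b x y = Wt r τ c a b y x := by
  unfold Wt
  by_cases h : x = y
  · subst h; rfl
  · have h1 : dl x y = 0 := by simp [dl, h]
    have h2 : dl y x = 0 := by simp [dl, Ne.symm h]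
    rw [h1, h2]; ring

lemma Wt_sum {n : ℕ} (r : Fin n → ℝ) (hr : ∑ i, r i = 1) (τ c : ℝ) (a b x : Fin n) :
    ∑ y, Wt r τ c a b x y =
      (r x * ((1 - τ) * dl x a + τ * r a)) * ((1 - τ) * dl x b + τ * r b) := by
  have e : ∀ y, Wt r τ c a b x y =
      ((1 - (2 * τ - τ ^ 2 + c)) * r x * (dl x a * dl x b)) * dl x y
      + (r x * (c * (dl x a * dl x b) + (τ ^ 2 * (r a * r b) - c * r a * dl a b))) * r y
      + (r x * c) * (dl y a * (dl y b * r y))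
      + (r x * (τ * (1 - τ)) * dl x a) * (dl y b * r y)
      + (r x * (τ * (1 - τ)) * dl x b) * (dl y a * r y) := by
    intro y; unfold Wt; ring
  simp only [e, Finset.sum_add_distrib, ← Finset.mul_sum, sum_dl_mul', sum_dl, hr]
  ring

lemma Nmat_step {n k : ℕ} (r : Fin n → ℝ) (hr0 : ∀ i, 0 ≤ r i) (hr : ∑ i, r i = 1)
    (τ c : ℝ) (hτ0 : 0 ≤ τ) (hτ1 : τ ≤ 1) (hc : 0 ≤ c) (hcr : ∀ i, c ≤ τ ^ 2 * r i)
    (ht : 2 * τ - τ ^ 2 + c ≤ 1)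
    (h : GoodK k (Nmat r (2 * τ - τ ^ 2 + c))) : GoodK (k+1) (Nmat r (2 * τ - τ ^ 2)) := by
  refine goodK_step _ _ h (Wt r τ c) ?_ ?_ ?_ (Nmat_sum r hr _) 
    (fun a x => r x * ((1 - τ) * dl x a + τ * r a)) (fun b x => (1 - τ) * dl x b + τ * r b)
    (fun a x => r x * ((1 - τ) * dl x a + τ * r a)) (fun b x => (1 - τ) * dl x b + τ * r b)
    (fun a b x => Wt_sum r hr τ c a b x) ?_
  · intro a b x y
    unfold Wt
    have hd := fun i j : Fin n => dl_nonneg i j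
    have h1 : 0 ≤ 1 - τ := by linarith
    have h2 : 0 ≤ 1 - (2 * τ - τ ^ 2 + c) := by linarith
    have h3 : 0 ≤ τ ^ 2 * (r a * r b) - c * r a * dl a b := by
      by_cases hab : a = b
      · subst hab
        have : dl a a = 1 := by simp [dl]
        rw [this]
        nlinarith [hcr a, hr0 a, mul_le_mul_of_nonneg_right (hcr a) (hr0 a)]
      · have : dl a b = 0 := by simp [dl, hab]
        rw [this]
        have := mul_nonneg (hr0 a) (hr0 b)
        nlinarith [mul_nonneg (sq_nonneg τ) this]
    have := hr0 x
    have := hr0 y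
    have := hd x y
    have := hd x a
    have := hd x b
    have := hd y a
    have := hd y b
    positivity
  · intro x y
    have e : ∀ a b, Wt r τ c a b x y =
      ((1 - (2 * τ - τ ^ 2 + c)) * r x * dl x y + r x * r y * c) * (dl x a * dl x b)
      + (r x * r y * c) * (dl y a * dl y b)
      + (r x * r y * (τ * (1 - τ))) * (dl x a * dl y b)
      + (r x * r y * (τ * (1 - τ))) * (dl y a * dl x b)
      + (r x * r y * τ ^ 2) * (r a * r b) + (- (r x * r y * c)) * (r a * dl a b) := by
      intro a b; unfold Wt; ring
    simp only [e, Finset.sum_add_distrib, ← Finset.mul_sum, sum_dl, hr, mul_one, Nmat]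
    ring
  · intro a b
    simp only [Wt_sum r hr]
    have e : ∀ x, (r x * ((1 - τ) * dl x a + τ * r a)) * ((1 - τ) * dl x b + τ * r b) =
      (1 - τ) ^ 2 * (dl x a * (dl x b * r x)) + ((1 - τ) * τ * r b) * (dl x a * r x)
      + ((1 - τ) * τ * r a) * (dl x b * r x) + (τ ^ 2 * (r a * r b)) * r x := by
      intro x; ring
    simp only [e, Finset.sum_add_distrib, ← Finset.mul_sum, sum_dl_mul', hr, Nmat]
    ring
  · intro a b y
    simp only [fun x => Wt_symm r τ c a b x y]
    exact Wt_sum r hr τ c a b y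

lemma exists_small {n : ℕ} (r : Fin n → ℝ) (hr : ∑ i, r i = 1)
    (ρ : ℝ) (hρ : 0 < ρ) (hρr : ∀ i, ρ ≤ r i) (hρ1 : ρ ≤ 1) (ε : ℝ) (hε : 0 < ε) :
    ∃ t k, 0 ≤ t ∧ t < ε ∧ GoodK k (Nmat r t) := by
  let T : Set ℝ := {t | 0 ≤ t ∧ t ≤ 1 ∧ ∃ k, GoodK k (Nmat r t)}
  have hT1 : (1 : ℝ) ∈ T := by
    refine ⟨by norm_num, le_rfl, 0, goodK_zero r hr _ ?_⟩
    intro i j; simp [Nmat]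
  have hbdd : BddBelow T := ⟨0, fun t ht => ht.1⟩
  have hstep : ∀ t ∈ T, ∃ t' ∈ T, t' ≤ t - ρ * t ^ 2 / 4 := by
    rintro t ⟨h0, h1, k, hk⟩
    obtain ⟨τ, ⟨hτ0, hτ1⟩, hτ⟩ : ∃ τ ∈ Set.Icc (0:ℝ) 1, 2 * τ - τ ^ 2 + τ ^ 2 * ρ = t := by
      have := intermediate_value_Icc (f := fun τ : ℝ => 2 * τ - τ ^ 2 + τ ^ 2 * ρ)
        (zero_le_one) (by fun_prop)
      exact this ⟨by simpa using h0, by norm_num; linarith⟩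
    have hsq := sq_nonneg τ
    have hp : 0 ≤ τ ^ 2 * ρ := by positivity
    refine ⟨2 * τ - τ ^ 2, ⟨by nlinarith, by linarith, k + 1, ?_⟩, ?_⟩
    · apply Nmat_step r (fun i => hρ.le.trans (hρr i)) hr τ (τ ^ 2 * ρ) hτ0 hτ1 hp
      · intro i
        exact mul_le_mul_of_nonneg_left (hρr i) hsq
      · linarith
      · rw [hτ]; exact hk
    · have h2 : t ≤ 2 * τ := by nlinarith
      have h3 : t ^ 2 ≤ (2 * τ) ^ 2 := pow_le_pow_left₀ h0 h2 2
      nlinarith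
  have hinf : sInf T ≤ 0 := by
    by_contra hcon
    push Not at hcon
    have hpos : 0 < ρ * (sInf T) ^ 2 / 4 := by positivity
    obtain ⟨t, ht, hlt⟩ := exists_lt_of_csInf_lt ⟨1, hT1⟩
      (lt_add_of_pos_right (sInf T) hpos)
    obtain ⟨t', ht', hle⟩ := hstep t ht
    have h1 := csInf_le hbdd ht
    have h2 := csInf_le hbdd ht'
    have h3 : (sInf T) ^ 2 ≤ t ^ 2 := pow_le_pow_left₀ hcon.le h1 2
    nlinarith
  obtain ⟨t, ht, hlt⟩ := exists_lt_of_csInf_lt ⟨1, hT1⟩ (lt_of_le_of_lt hinf hε)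
  obtain ⟨h0, _, k, hk⟩ := ht
  exact ⟨t, k, h0, hlt, hk⟩

lemma exists_pos_le {ι : Type} [Fintype ι] (f : ι → ℝ) (hf : ∀ i, 0 < f i) :
    ∃ ρ, 0 < ρ ∧ ρ ≤ 1 / 2 ∧ ∀ i, ρ ≤ f i := by
  rcases isEmpty_or_nonempty ι with h | h
  · exact ⟨1 / 2, by norm_num, le_rfl, fun i => h.elim i⟩
  · obtain ⟨i, hi⟩ := Finite.exists_min f
    exact ⟨min (1/2) (f i), lt_min (by norm_num) (hf i), min_le_left _ _,
      fun j => (min_le_right _ _).trans (hi j)⟩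

/-- Every nonsingular `n × n` joint probability matrix with strictly
positive entries is a good matrix. -/
theorem isGoodMatrix_of_nonsingular_pos {n : ℕ} (M : Matrix (Fin n) (Fin n) ℝ)
    (hjp : IsJointProbMatrix M) (hdet : M.det ≠ 0) (hpos : ∀ i j, 0 < M i j) :
    IsGoodMatrix M := by
  obtain ⟨hnn, hsum⟩ := hjp
  obtain ⟨ρ, hρ, hρ2, hρM⟩ := exists_pos_le (fun p : Fin n × Fin n => M p.1 p.2)
    (fun p => hpos _ _)
  let r : Fin n → ℝ := fun i => ∑ j, M i j
  let c : Fin n → ℝ := fun j => ∑ i, M i j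
  have hr : ∑ i, r i = 1 := hsum
  have hc : ∑ i, c i = 1 := by rw [← hsum, Finset.sum_comm]
  have hMr : ∀ i j, M i j ≤ r i := fun i j =>
    Finset.single_le_sum (f := fun j => M i j) (fun j _ => hnn i j) (Finset.mem_univ j)
  have hr0 : ∀ i, 0 < r i := fun i => (hpos i i).trans_le (hMr i i)
  have hc0 : ∀ j, 0 ≤ c j := fun j => Finset.sum_nonneg fun i _ => hnn i j
  have hr1 : ∀ i, r i ≤ 1 := fun i => hr ▸
    Finset.single_le_sum (f := r) (fun j _ => (hr0 j).le) (Finset.mem_univ i)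
  have hc1 : ∀ i, c i ≤ 1 := fun i => hc ▸
    Finset.single_le_sum (f := c) (fun j _ => hc0 j) (Finset.mem_univ i)
  obtain ⟨t, k, ht0, htρ, hk⟩ := exists_small r hr ρ hρ
    (fun i => (hρM (i, i)).trans (hMr i i)) (by linarith) ρ hρ
  have ht1 : 0 < 1 - t := by linarith
  let B : Fin n → Fin n → ℝ := fun i j => (M i j / r i - t * c j) / (1 - t)
  have hB0 : ∀ i j, 0 ≤ B i j := by
    intro i j
    apply div_nonneg _ ht1.le
    rw [sub_nonneg, le_div_iff₀ (hr0 i)]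
    have h1 : t ≤ M i j := htρ.le.trans (hρM (i, j))
    have h2 : c j * r i ≤ 1 := mul_le_one₀ (hc1 j) (hr0 i).le (hr1 i)
    calc t * c j * r i = t * (c j * r i) := by ring
      _ ≤ t * 1 := mul_le_mul_of_nonneg_left h2 ht0
      _ ≤ M i j := by linarith
  have hBs : ∀ i, ∑ j, B i j = 1 := by
    intro i
    simp only [B, ← Finset.sum_div, Finset.sum_sub_distrib, ← Finset.mul_sum, hc]
    have : ∑ j, M i j = r i := rfl
    rw [this, div_self (hr0 i).ne', mul_one, div_self ht1.ne']
  have hrB : ∀ i j, r i * B i j = (M i j - t * (c j * r i)) / (1 - t) := by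
    intro i j
    have := (hr0 i).ne'
    simp only [B]
    field_simp
  have hNB : ∀ a b, ∑ y, Nmat r t a y * B y b = M a b := by
    intro a b
    have e : ∀ y, Nmat r t a y * B y b =
        ((1 - t) * r a) * (dl a y * B y b) + (t * r a) * (r y * B y b) := by
      intro y; simp only [Nmat]; ring
    have e2 : ∑ y, r y * B y b = c b := by
      simp only [hrB, ← Finset.sum_div, Finset.sum_sub_distrib, ← Finset.mul_sum, hr]
      have : ∑ y, M y b = c b := rfl
      rw [this]
      field_simp
    simp only [e, Finset.sum_add_distrib, ← Finset.mul_sum, sum_dl_mul, e2]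
    rw [mul_assoc, hrB]
    field_simp
    ring
  have hN0 : ∀ x y, 0 ≤ Nmat r t x y := by
    intro x y
    have := (hr0 x).le
    have := (hr0 y).le
    have := dl_nonneg x y
    have := ht1.le
    unfold Nmat
    positivity
  have hgood : GoodK (k+1) M := by
    refine goodK_step _ M hk (fun a b x y => Nmat r t x y * dl x a * B y b) ?_ ?_ ?_ hsum
      (fun a x => dl x a) (fun b x => ∑ y, Nmat r t x y * B y b)
      (fun a y => Nmat r t a y) (fun b y => B y b) ?_ ?_
    · intro a b x y
      exact mul_nonneg (mul_nonneg (hN0 x y) (dl_nonneg _ _)) (hB0 _ _)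
    · intro x y
      simp only [← Finset.mul_sum, hBs, mul_one, sum_dl]
    · intro a b
      have e : ∀ x, ∑ y, Nmat r t x y * dl x a * B y b = dl x a * M x b := by
        intro x
        rw [← hNB, Finset.mul_sum]
        exact Finset.sum_congr rfl fun y _ => by ring
      simp only [e, sum_dl_mul']
    · intro a b x
      rw [Finset.mul_sum]
      exact Finset.sum_congr rfl fun y _ => by ring
    · intro a b y
      rw [← Finset.sum_mul]
      congr 1
      rw [← sum_dl_mul' a (fun x => Nmat r t x y)]
      exact Finset.sum_congr rfl fun y _ => by ring
  have hJ : IsJointMatrixOf M (fun p : Fin n × Fin n => M p.1 p.2) (fun p => p.1)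
      (fun p => p.2) := by
    intro i j
    simp [pr, Fintype.sum_prod_type, ite_and]
  refine ⟨Fin n × Fin n, inferInstance, fun p => M p.1 p.2, fun p => p.1, fun p => p.2, k + 1,
    ⟨fun p => hnn _ _, ?_⟩, hJ, hgood _ _ _ _ _ hJ⟩
  simpa only [Fintype.sum_prod_type] using hsum
end

section
/- Every nonzero r-matrix M can be written as a finite sum of r-matrices of rank 1, each having the same support as M. -/
open scoped BigOperators Classical

theorem aux_eps {m n : ℕ} (M : Matrix (Fin m) (Fin n) ℝ) (hM : ∀ i j, 0 ≤ M i j) :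
    ∃ ε : ℝ, 0 < ε ∧ ∀ i j, M i j ≠ 0 → ε * (∑ k, M i k) < M i j := by
  have h : ∀ᶠ ε in nhdsWithin (0:ℝ) (Set.Ioi 0),
      ∀ i j, M i j ≠ 0 → ε * (∑ k, M i k) < M i j := by
    rw [Filter.eventually_all]; intro i
    rw [Filter.eventually_all]; intro j
    by_cases h0 : M i j = 0
    · simp [h0]
    have hpos : 0 < M i j := lt_of_le_of_ne (hM i j) (Ne.symm h0)
    have ht : Filter.Tendsto (fun ε : ℝ => ε * (∑ k, M i k)) (nhdsWithin (0:ℝ) (Set.Ioi 0))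
        (nhds 0) := by
      have hc : Continuous (fun ε : ℝ => ε * (∑ k, M i k)) := by fun_prop
      have := hc.tendsto 0
      rw [zero_mul] at this
      exact this.mono_left nhdsWithin_le_nhds
    filter_upwards [ht.eventually (gt_mem_nhds hpos)] with ε hε _ using hε
  obtain ⟨ε, h1, h2⟩ := (h.and self_mem_nhdsWithin).exists
  exact ⟨ε, h2, h1⟩

/-- Every nonzero r-matrix `M` is a finite sum of r-matrices of
rank `1`, each having the same support as `M`. -/
theorem rMatrix_eq_sum_rank_one {m n : ℕ} (M : Matrix (Fin m) (Fin n) ℝ)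
    (hM : IsRMatrix M) (hne : M ≠ 0) :
    ∃ (l : ℕ) (Ms : Fin l → Matrix (Fin m) (Fin n) ℝ),
      M = ∑ i, Ms i ∧
      ∀ i, IsRMatrix (Ms i) ∧ (Ms i).rank = 1 ∧ msupport (Ms i) = msupport M := by
  obtain ⟨hnn, A, B, hAB⟩ := hM
  have hmem : ∀ i j, M i j ≠ 0 ↔ (i ∈ A ∧ j ∈ B) := by
    intro i j
    have := Set.ext_iff.1 hAB (i, j)
    simpa [msupport] using this
  obtain ⟨i0, j0, h0⟩ : ∃ i j, M i j ≠ 0 := by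
    by_contra! h
    exact hne (by ext i j; exact h i j)
  obtain ⟨ε, hε, hlt⟩ := aux_eps M hnn
  set S : Fin m → ℝ := fun i => ∑ k, M i k with hS
  have hSnn : ∀ i, 0 ≤ S i := fun i => Finset.sum_nonneg fun k _ => hnn i k
  set b : ℝ := (Fintype.card B : ℝ) with hb
  have hbnn : 0 ≤ b := Nat.cast_nonneg _
  have hd : 0 < 1 + ε * b := by positivity
  have hz : ∀ i, i ∉ A → ∀ j, M i j = 0 := fun i hi j => by
    by_contra h; exact hi ((hmem i j).1 h).1
  have hz' : ∀ j, j ∉ B → ∀ i, M i j = 0 := fun j hj i => by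
    by_contra h; exact hj ((hmem i j).1 h).2
  let w : B → Fin m → ℝ := fun q i => M i q - ε / (1 + ε * b) * S i
  let v : B → Fin n → ℝ := fun q j => if j ∈ B then (if j = q then 1 else 0) + ε else 0
  have hw0 : ∀ q i, i ∉ A → w q i = 0 := fun q i hi => by
    simp [w, hS, hz i hi]
  have hwpos : ∀ q i, i ∈ A → 0 < w q i := fun q i hi => by
    have h1 := hlt i q ((hmem i q).2 ⟨hi, q.2⟩)
    have h2 : ε / (1 + ε * b) ≤ ε := div_le_self hε.le (by nlinarith)
    have h3 := mul_le_mul_of_nonneg_right h2 (hSnn i)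
    simp only [w]
    change ε * S i < _ at h1
    linarith
  have hv0 : ∀ q j, j ∉ B → v q j = 0 := fun q j hj => by simp [v, hj]
  have hvpos : ∀ q j, j ∈ B → 0 < v q j := fun q j hj => by
    simp only [v, hj, if_true]; split_ifs <;> linarith
  let N : B → Matrix (Fin m) (Fin n) ℝ := fun q => Matrix.vecMulVec (w q) (v q)
  have hN : ∀ q i j, N q i j = w q i * v q j := fun q i j => rfl
  have hsupp : ∀ q, msupport (N q) = A ×ˢ B := by
    intro q
    ext ⟨i, j⟩
    simp only [msupport, Set.mem_ofPred_eq, Set.mem_prod, hN]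
    constructor
    · intro h
      constructor
      · by_contra hi; exact h (by rw [hw0 q i hi, zero_mul])
      · by_contra hj; exact h (by rw [hv0 q j hj, mul_zero])
    · rintro ⟨hi, hj⟩
      exact (mul_pos (hwpos q i hi) (hvpos q j hj)).ne'
  have hsumM : ∀ i, ∑ q : B, M i q = S i := by
    intro i
    have h1 : ∑ q : B, M i q = ∑ k ∈ B.toFinset, M i k :=
      (Finset.sum_subtype B.toFinset (p := fun x => x ∈ B) (by simp) (fun k => M i k)).symm
    rw [h1]
    apply Finset.sum_subset (Finset.subset_univ _)
    intro k _ hk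
    exact hz' k (by simpa using hk) i
  have hsum : M = ∑ q, N q := by
    ext i j
    rw [Matrix.sum_apply]
    simp only [hN]
    by_cases hj : j ∈ B
    · have e1 : ∀ q : B, w q i * v q j
          = (if q = ⟨j, hj⟩ then w q i else 0) + ε * w q i := by
        intro q
        by_cases h : q = ⟨j, hj⟩
        · subst h; simp [v, hj]; ring
        · have : j ≠ q := fun h' => h (Subtype.ext h'.symm)
          simp [v, hj, h, this]; ring
      simp only [e1]
      rw [Finset.sum_add_distrib, ← Finset.mul_sum]
      have e2 : ∑ q : B, w q i = S i - b * (ε / (1 + ε * b) * S i) := by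
        simp only [w]
        rw [Finset.sum_sub_distrib, hsumM]
        simp [hb]
      rw [e2]
      simp only [Finset.sum_ite_eq', Finset.mem_univ, if_true, w]
      field_simp
      ring
    · rw [hz' j hj i]
      simp [hv0 _ j hj]
  refine ⟨Fintype.card B, fun k => N ((Fintype.equivFin B).symm k), ?_, fun k => ?_⟩
  · rw [hsum]; exact ((Fintype.equivFin B).symm.sum_comp N).symm
  · beta_reduce
    generalize (Fintype.equivFin B).symm k = q
    refine ⟨⟨fun i j => ?_, A, B, hsupp q⟩, ?_, (hsupp q).trans hAB.symm⟩
    · rw [hN]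
      apply mul_nonneg
      · by_cases hi : i ∈ A
        · exact (hwpos q i hi).le
        · exact (hw0 q i hi).ge
      · by_cases hj : j ∈ B
        · exact (hvpos q j hj).le
        · exact (hv0 q j hj).ge
    · apply le_antisymm (Matrix.rank_vecMulVec_le _ _)
      rw [Nat.one_le_iff_ne_zero]
      intro hr
      have h : N q = 0 := by
        change Module.finrank ℝ (LinearMap.range (N q).mulVecLin) = 0 at hr
        rw [Submodule.finrank_eq_zero, LinearMap.range_eq_bot] at hr
        ext i j
        have h2 := congrFun (LinearMap.congr_fun hr (Pi.single j 1)) i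
        simpa using h2
      obtain ⟨hi, hj⟩ := (hmem i0 j0).1 h0
      have h1 := mul_pos (hwpos q i0 hi) (hvpos q j0 hj)
      rw [← hN, h] at h1
      simp at h1
end

section
/- Every matrix with nonnegative real entries that has at least one nonzero entry and is not a block matrix admits an r-decomposition. -/
open scoped BigOperators Classical

/-- Two support positions sharing a row or a column. -/
def posRel {m n : ℕ} (M : Matrix (Fin m) (Fin n) ℝ) (p q : Fin m × Fin n) : Prop :=
  M p.1 p.2 ≠ 0 ∧ M q.1 q.2 ≠ 0 ∧ (p.1 = q.1 ∨ p.2 = q.2)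

theorem posRel_symm {m n : ℕ} {M : Matrix (Fin m) (Fin n) ℝ} {p q : Fin m × Fin n}
    (h : posRel M p q) : posRel M q p :=
  ⟨h.2.1, h.1, h.2.2.imp Eq.symm Eq.symm⟩

/-- There is a walk from `x` covering `T`. -/
def walkCovers {α : Type} (r : α → α → Prop) (x : α) (T : Set α) : Prop :=
  ∃ (f : ℕ → α) (N : ℕ), f 0 = x ∧ (∀ k, r (f k) (f (k + 1))) ∧ ∀ t ∈ T, ∃ k < N, f k = t

theorem walkCovers_step {α : Type} {r : α → α → Prop} {x y : α} {T : Set α}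
    (hxy : r x y) (h : walkCovers r y T) : walkCovers r x (insert x T) := by
  obtain ⟨f, N, h0, hr, hT⟩ := h
  refine ⟨fun k => Nat.casesOn k x f, N + 1, rfl, ?_, ?_⟩
  · intro k
    cases k with
    | zero => simpa [h0] using hxy
    | succ k => exact hr k
  · rintro t (rfl | ht)
    · exact ⟨0, by omega, rfl⟩
    · obtain ⟨k, hk, e⟩ := hT t ht
      exact ⟨k + 1, by omega, e⟩

theorem walkCovers_mono {α : Type} {r : α → α → Prop} {x : α} {S T : Set α}
    (hST : S ⊆ T) (h : walkCovers r x T) : walkCovers r x S := by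
  obtain ⟨f, N, h0, hr, hT⟩ := h
  exact ⟨f, N, h0, hr, fun t ht => hT t (hST ht)⟩

theorem walkCovers_trans {α : Type} {r : α → α → Prop} {x y : α} {T : Set α}
    (hxy : Relation.ReflTransGen r x y) (h : walkCovers r y T) : walkCovers r x T := by
  induction hxy using Relation.ReflTransGen.head_induction_on with
  | refl => exact h
  | head h1 _ ih => exact walkCovers_mono (Set.subset_insert _ _) (walkCovers_step h1 ih)

theorem posRel_connected {m n : ℕ} (M : Matrix (Fin m) (Fin n) ℝ) (hnb : ¬ IsBlockMatrix M)
    (p q : Fin m × Fin n) (hp : M p.1 p.2 ≠ 0) (hq : M q.1 q.2 ≠ 0) :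
    Relation.ReflTransGen (posRel M) p q := by
  by_contra hc
  apply hnb
  have key : ∀ a b : Fin m × Fin n, Relation.ReflTransGen (posRel M) p a → M a.1 a.2 ≠ 0 →
      M b.1 b.2 ≠ 0 → (a.1 = b.1 ∨ a.2 = b.2) → Relation.ReflTransGen (posRel M) p b :=
    fun a b h ha hb hab => h.tail ⟨ha, hb, hab⟩
  let C : Fin m × Fin n → Prop := fun a => Relation.ReflTransGen (posRel M) p a ∧ M a.1 a.2 ≠ 0
  let I : Finset (Fin m) := Finset.univ.filter fun i => ∃ j, C (i, j)
  let J : Finset (Fin n) := Finset.univ.filter fun j => ∃ i, C (i, j)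
  have hI : ∀ i, i ∈ I ↔ ∃ j, C (i, j) := fun i => by simp [I]
  have hJ : ∀ j, j ∈ J ↔ ∃ i, C (i, j) := fun j => by simp [J]
  have pI : p.1 ∈ I := (hI _).2 ⟨p.2, Relation.ReflTransGen.refl, hp⟩
  have pJ : p.2 ∈ J := (hJ _).2 ⟨p.1, Relation.ReflTransGen.refl, hp⟩
  have qI : q.1 ∈ Iᶜ := by
    rw [Finset.mem_compl, hI]
    rintro ⟨j, h1, h2⟩
    exact hc (key _ _ h1 h2 hq (Or.inl rfl))
  have qJ : q.2 ∈ Jᶜ := by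
    rw [Finset.mem_compl, hJ]
    rintro ⟨i, h1, h2⟩
    exact hc (key _ _ h1 h2 hq (Or.inr rfl))
  refine ⟨I, J, ⟨_, pI⟩, ⟨_, qI⟩, ⟨_, pJ⟩, ⟨_, qJ⟩, ⟨_, pI, _, pJ, hp⟩, ⟨_, qI, _, qJ, hq⟩, ?_⟩
  rintro i j (⟨hi, hj⟩ | ⟨hi, hj⟩) <;> by_contra hM
  · rw [Finset.mem_compl, hJ] at hj
    obtain ⟨j', h1, h2⟩ := (hI _).1 hi
    exact hj ⟨i, key _ (i, j) h1 h2 hM (Or.inl rfl), hM⟩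
  · rw [Finset.mem_compl, hI] at hi
    obtain ⟨i', h1, h2⟩ := (hJ _).1 hj
    exact hi ⟨j, key _ (i, j) h1 h2 hM (Or.inr rfl), hM⟩

theorem exists_walk {m n : ℕ} (M : Matrix (Fin m) (Fin n) ℝ) (hnb : ¬ IsBlockMatrix M)
    (p : Fin m × Fin n) (hp : M p.1 p.2 ≠ 0) (T : Finset (Fin m × Fin n))
    (hT : ∀ t ∈ T, M t.1 t.2 ≠ 0) : walkCovers (posRel M) p (T : Set (Fin m × Fin n)) := by
  induction T using Finset.induction_on with
  | empty => exact ⟨fun _ => p, 0, rfl, fun _ => ⟨hp, hp, Or.inl rfl⟩, by simp⟩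
  | insert b T _ ih =>
    have hb := hT b (Finset.mem_insert_self _ _)
    have h1 := ih fun t ht => hT t (Finset.mem_insert_of_mem ht)
    have h2 := walkCovers_trans (posRel_connected M hnb b p hb hp) h1
    have h3 := walkCovers_step (x := b) ⟨hb, hb, Or.inl rfl⟩ h2
    rw [Finset.coe_insert]
    exact walkCovers_trans (posRel_connected M hnb p b hp hb) h3

/-- Every matrix with nonnegative real entries that has at least one
nonzero entry and is not a block matrix admits an r-decomposition. -/
theorem exists_rDecomposition_of_not_block {m n : ℕ} (M : Matrix (Fin m) (Fin n) ℝ)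
    (hnn : ∀ i j, 0 ≤ M i j) (hne : M ≠ 0) (hnb : ¬ IsBlockMatrix M) :
    ∃ (l : ℕ) (Ms : Fin l → Matrix (Fin m) (Fin n) ℝ), IsRDecomposition M l Ms := by
  obtain ⟨p, hp⟩ : ∃ p : Fin m × Fin n, M p.1 p.2 ≠ 0 := by
    by_contra! h
    exact hne (Matrix.ext fun i j => h (i, j))
  obtain ⟨f, N, -, hr, hcov⟩ := exists_walk M hnb p hp
    (Finset.univ.filter fun t => M t.1 t.2 ≠ 0) (by simp)
  let R : ℕ → Fin m × Fin n → Prop := fun k t => t = f k ∨ t = f (k + 1)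
  let c : Fin m × Fin n → ℝ := fun t => ∑ k : Fin N, if R k t then (1 : ℝ) else 0
  have hc0 : ∀ t, 0 ≤ c t := fun t => Finset.sum_nonneg fun k _ => by split_ifs <;> norm_num
  have hcpos : ∀ (k : Fin N) t, R k t → 0 < c t := fun k t h =>
    Finset.sum_pos' (fun k _ => by split_ifs <;> norm_num)
      ⟨k, Finset.mem_univ _, by rw [if_pos h]; norm_num⟩
  let Ms : Fin N → Matrix (Fin m) (Fin n) ℝ := fun k i j =>
    M i j / c (i, j) * if R k (i, j) then (1 : ℝ) else 0
  have hsupp : ∀ k : Fin N, msupport (Ms k) = {t | R k t} := by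
    intro k
    ext t
    obtain ⟨i, j⟩ := t
    simp only [msupport, Set.mem_setOf_eq, Ms]
    constructor
    · intro h
      by_contra h'
      simp [h'] at h
    · intro h
      have hM : M i j ≠ 0 := by
        rcases h with h | h
        · have := (hr k).1
          rwa [← h] at this
        · have := (hr k).2.1
          rwa [← h] at this
      rw [if_pos h, mul_one]
      exact div_ne_zero hM (hcpos k _ h).ne'
  refine ⟨N, Ms, ?_, ?_, ?_⟩
  · ext i j
    rw [Matrix.sum_apply]
    simp only [Ms]
    rw [← Finset.mul_sum]
    change M i j = M i j / c (i, j) * c (i, j)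
    by_cases hM : M i j = 0
    · simp [hM]
    · obtain ⟨k, hk, e⟩ := hcov (i, j) (by simpa using hM)
      rw [div_mul_cancel₀]
      exact (hcpos ⟨k, hk⟩ (i, j) (Or.inl e.symm)).ne'
  · intro k
    refine ⟨fun i j => mul_nonneg (div_nonneg (hnn i j) (hc0 _)) (by split_ifs <;> norm_num), 
      {(f k).1, (f (k + 1)).1}, {(f k).2, (f (k + 1)).2}, ?_⟩
    rw [hsupp]
    have h := (hr k).2.2
    ext ⟨i, j⟩
    simp only [R, Set.mem_setOf_eq, Set.mem_prod, Set.mem_insert_iff, Set.mem_singleton_iff,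
      Prod.ext_iff]
    rcases h with h | h <;> rw [h] <;> tauto
  · intro k h
    refine ⟨f (k + 1), ?_⟩
    rw [hsupp, hsupp]
    exact ⟨Or.inr rfl, Or.inl rfl⟩
end
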